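/- Let G be a P4-sparse graph and let A be a set of four vertices inducing a P4 in G. Then there do not exist vertices v in P(A), x in T(A), and y in I(A) such that the only edge of G among {v, x, y} is vy. -/

import Mathlib

open SimpleGraph

variable {V : Type*}

/-- `a, b, c, d` form an induced path on four vertices (a `P4`) in `G`. -/
def IsP4 (G : SimpleGraph V) (a b c d : V) : Prop :=
  a ≠ b ∧ a ≠ c ∧ a ≠ d ∧ b ≠ c ∧ b ≠ d ∧ c ≠ d ∧
    G.Adj a b ∧ G.Adj b c ∧ G.Adj c d ∧ ¬G.Adj a c ∧ ¬G.Adj a d ∧ ¬G.Adj b d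

/-- A graph is a cograph if it contains no induced `P4`. -/
def IsCograph (G : SimpleGraph V) : Prop :=
  ∀ a b c d : V, ¬IsP4 G a b c d

/-- The vertex set `A` induces a `P4` in `G`. -/
def InducesP4 (G : SimpleGraph V) (A : Set V) : Prop :=
  ∃ a b c d : V, IsP4 G a b c d ∧ A = {a, b, c, d}

/-- `G` is `P4`-sparse: every set of five vertices induces at most one `P4`. -/
def P4Sparse (G : SimpleGraph V) : Prop :=
  ∀ s : Set V, s.ncard = 5 →
    ∀ A B : Set V, A ⊆ s → B ⊆ s → InducesP4 G A → InducesP4 G B → A = B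

/-- `F` is a deletion set of `G`: a set of edges of `G` whose removal yields a cograph. -/
def IsDeletionSet (G : SimpleGraph V) (F : Set (Sym2 V)) : Prop :=
  F ⊆ G.edgeSet ∧ IsCograph (G.deleteEdges F)

/-- The minimum size of a deletion set of `G`. -/
noncomputable def cographAlpha (G : SimpleGraph V) : ℕ :=
  sInf {n | ∃ F : Set (Sym2 V), IsDeletionSet G F ∧ F.ncard = n}

/-- `T(A)`: the vertices outside `A` adjacent to all vertices of `A`. -/
def tSet (G : SimpleGraph V) (A : Set V) : Set V :=
  {v | v ∉ A ∧ ∀ a ∈ A, G.Adj v a}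

/-- `I(A)`: the vertices outside `A` adjacent to no vertex of `A`. -/
def iSet (G : SimpleGraph V) (A : Set V) : Set V :=
  {v | v ∉ A ∧ ∀ a ∈ A, ¬G.Adj v a}

/-- `P(A)`: the vertices `v` outside `A` with `1 ≤ |N(v) ∩ A| ≤ 3`. -/
def pSet (G : SimpleGraph V) (A : Set V) : Set V :=
  {v | v ∉ A ∧ 1 ≤ (G.neighborSet v ∩ A).ncard ∧ (G.neighborSet v ∩ A).ncard ≤ 3}

/-!
Suppose `vy` is the only edge among `v ∈ P(A)`, `x ∈ T(A)` and `y ∈ I(A)`. Choose a neighbour `p` of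
`v` in `A` and a non-neighbour `q ≠ p` of `p` in `A`. The five vertices `y, v, p, q, x` then induce
two `P4`s: `y v p x`, together with `y v q x` if `v` is adjacent to `q` and `v p x q` otherwise.
-/

section

variable {G : SimpleGraph V} {a b c d e p : V} {A B : Set V}

theorem IsP4.of_adj (hab : G.Adj a b) (hbc : G.Adj b c) (hcd : G.Adj c d)
    (hac : ¬G.Adj a c) (had : ¬G.Adj a d) (hbd : ¬G.Adj b d) : IsP4 G a b c d := by
  have hne_ac : a ≠ c := by
    rintro rfl
    exact had hcd
  have hne_ad : a ≠ d := by
    rintro rfl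
    exact hbd hab.symm
  have hne_bd : b ≠ d := by
    rintro rfl
    exact had hab
  exact ⟨hab.ne, hne_ac, hne_ad, hbc.ne, hne_bd, hcd.ne, hab, hbc, hcd, hac, had, hbd⟩

theorem IsP4.exists_not_adj (h : IsP4 G a b c d) (hp : p ∈ ({a, b, c, d} : Set V)) :
    ∃ q ∈ ({a, b, c, d} : Set V), q ≠ p ∧ ¬G.Adj p q := by
  obtain ⟨-, hac, -, -, hbd, -, -, -, -, not_adj_ac, -, not_adj_bd⟩ := h
  rcases hp with rfl | rfl | rfl | rfl
  · exact ⟨c, by simp, hac.symm, not_adj_ac⟩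
  · exact ⟨d, by simp, hbd.symm, not_adj_bd⟩
  · exact ⟨a, by simp, hac, mt Adj.symm not_adj_ac⟩
  · exact ⟨b, by simp, hbd, mt Adj.symm not_adj_bd⟩

theorem IsP4.inducesP4 (h : IsP4 G a b c d) : InducesP4 G {a, b, c, d} :=
  ⟨a, b, c, d, h, rfl⟩

theorem InducesP4.ncard_eq_four (hA : InducesP4 G A) : A.ncard = 4 := by
  obtain ⟨a, b, c, d, ⟨hab, hac, had, hbc, hbd, hcd, -⟩, rfl⟩ := hA
  rw [Set.ncard_insert_of_notMem (by simp [hab, hac, had]),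
    Set.ncard_insert_of_notMem (by simp [hbc, hbd]), Set.ncard_pair hcd]

theorem InducesP4.finite (hA : InducesP4 G A) : A.Finite :=
  Set.finite_of_ncard_ne_zero (by simp [hA.ncard_eq_four])

namespace P4Sparse

theorem eq_of_subset_insert (hG : P4Sparse G) (hA : InducesP4 G A) (hB : InducesP4 G B)
    (hBA : B ⊆ insert e A) : A = B := by
  by_cases he : e ∈ A
  · rw [Set.insert_eq_of_mem he] at hBA
    refine (Set.eq_of_subset_of_ncard_le hBA ?_ hA.finite).symm
    rw [hA.ncard_eq_four, hB.ncard_eq_four]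
  · have hcard : (insert e A).ncard = 5 := by
      rw [Set.ncard_insert_of_notMem he hA.finite, hA.ncard_eq_four]
    exact hG _ hcard A B (Set.subset_insert e A) hBA hA hB

theorem third_vertex_unique (hG : P4Sparse G) (hc : IsP4 G a b c d) (he : IsP4 G a b e d) :
    c = e := by
  have hsets : ({a, b, c, d} : Set V) = {a, b, e, d} :=
    hG.eq_of_subset_insert (e := e) hc.inducesP4 he.inducesP4 (by simp [Set.insert_subset_iff])
  have hmem : c ∈ ({a, b, e, d} : Set V) := hsets ▸ by simp
  obtain ⟨-, hac, -, hbc, -, hcd, -⟩ := hc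
  simpa [hac.symm, hbc.symm, hcd] using hmem

-- An induced `P5` (when `a ≁ e`) and an induced `C5` (when `a ∼ e`) are both excluded here.
theorem not_isP4_shift (hG : P4Sparse G) (h : IsP4 G a b c d) : ¬IsP4 G b c d e := by
  intro h'
  have hsets : ({a, b, c, d} : Set V) = {b, c, d, e} :=
    hG.eq_of_subset_insert (e := e) h.inducesP4 h'.inducesP4 (by simp [Set.insert_subset_iff])
  have hmem : a ∈ ({b, c, d, e} : Set V) := hsets ▸ by simp
  obtain ⟨hab, hac, had, -, -, -, -, -, -, -, not_adj_ad, -⟩ := h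
  obtain ⟨-, -, -, -, -, -, -, -, adj_de, -⟩ := h'
  obtain rfl : a = e := by simpa [hab, hac, had] using hmem
  exact not_adj_ad adj_de.symm

end P4Sparse

theorem p4Sparse_fact_2_15_general (hG : P4Sparse G)
    (hA : ∀ p ∈ A, ∃ q ∈ A, q ≠ p ∧ ¬G.Adj p q) :
    ¬∃ v x y : V, (G.neighborSet v ∩ A).Nonempty ∧ x ∈ tSet G A ∧ y ∈ iSet G A ∧
      ¬G.Adj v x ∧ G.Adj v y ∧ ¬G.Adj x y := by
  rintro ⟨v, x, y, ⟨p, hvp, hpA⟩, ⟨-, hx⟩, ⟨-, hy⟩, hvx, hvy, hxy⟩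
  obtain ⟨q, hqA, hqp, hpq⟩ := hA p hpA
  have isP4_through {w : V} (hw : w ∈ A) (hvw : G.Adj v w) : IsP4 G y v w x :=
    .of_adj hvy.symm hvw (hx w hw).symm (hy w hw) (mt Adj.symm hxy) hvx
  by_cases hvq : G.Adj v q
  · exact hqp (hG.third_vertex_unique (isP4_through hqA hvq) (isP4_through hpA hvp))
  · exact hG.not_isP4_shift (isP4_through hpA hvp)
      (.of_adj hvp (hx p hpA).symm (hx q hqA) hvx hvq hpq)

end

/-- **Fact 2.15.** If `G` is `P4`-sparse and `A` induces a `P4`, then there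
are no `v ∈ P(A)`, `x ∈ T(A)`, `y ∈ I(A)` such that the only edge of `G` among `{v, x, y}`
is `vy`. -/
theorem p4Sparse_fact_2_15 (G : SimpleGraph V) (hG : P4Sparse G)
    (a b c d : V) (hP4 : IsP4 G a b c d) (A : Set V) (hA : A = {a, b, c, d}) :
    ¬∃ v x y : V, v ∈ pSet G A ∧ x ∈ tSet G A ∧ y ∈ iSet G A ∧
      ¬G.Adj v x ∧ G.Adj v y ∧ ¬G.Adj x y := by
  subst hA
  rintro ⟨v, x, y, ⟨-, hv, -⟩, h⟩
  exact p4Sparse_fact_2_15_general hG (fun _ ↦ hP4.exists_not_adj)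
    ⟨v, x, y, Set.nonempty_of_ncard_ne_zero (Nat.one_le_iff_ne_zero.mp hv), h⟩
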